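/- Limit jump formulas at an impulsive spike: in the regularised impulsive full pp-wave on ℝ^n (flat wave surface for simplicity, metric h with inverse h^{ik}), let x_ε solve the regularised geodesic x-equation through the first δ-spike of strength α with data converging to (x₀, ẋ₀) at the left of the strip [−ε, ε], and let r_ε be the corresponding r-component with data converging to (r₀, ṙ₀). Then as ε ↘ 0: (i) x_ε(ε) → x₀; (ii) ẋ_ε(ε)^i → ẋ₀^i − (1/2)h^{ik}(x₀)(2a_k(x₀)/L − α H_{,k}(x₀)); (iii) r_ε(ε) → r₀ + (α/2)H(x₀). -/

import Mathlib

open MeasureTheory Filter Set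

noncomputable section

/-- Partial derivative of `f` in the `j`-th coordinate direction at `x`. -/
def pderiv' (n : ℕ) (f : (Fin n → ℝ) → ℝ) (j : Fin n) (x : Fin n → ℝ) : ℝ :=
  fderiv ℝ f x (Pi.single j 1)

/-- Christoffel symbols of the metric `h` (with pointwise inverse `hinv`). -/
def christoffelSym (n : ℕ) (h hinv : (Fin n → ℝ) → Matrix (Fin n) (Fin n) ℝ)
    (x : Fin n → ℝ) (i j k : Fin n) : ℝ :=
  (1/2) * ∑ l, hinv x i l *
    (pderiv' n (fun y => h y l k) j x + pderiv' n (fun y => h y l j) k x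
      - pderiv' n (fun y => h y j k) l x)

/-- The bilinear form of the metric `h` at `x`. -/
def hBil (n : ℕ) (h : (Fin n → ℝ) → Matrix (Fin n) (Fin n) ℝ)
    (x v w : Fin n → ℝ) : ℝ := ∑ i, ∑ j, h x i j * v i * w j

/-- The `h`-norm of a tangent vector. -/
def hNorm (n : ℕ) (h : (Fin n → ℝ) → Matrix (Fin n) (Fin n) ℝ)
    (x v : Fin n → ℝ) : ℝ := Real.sqrt (hBil n h x v v)

/-- Length of the path `γ : [0,1] → ℝⁿ` w.r.t. the metric `h`. -/
def pathLen (n : ℕ) (h : (Fin n → ℝ) → Matrix (Fin n) (Fin n) ℝ)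
    (γ : ℝ → Fin n → ℝ) : ℝ := ∫ t in (0:ℝ)..1, hNorm n h (γ t) (deriv γ t)

/-- Riemannian distance associated to `h`. -/
def riemDist (n : ℕ) (h : (Fin n → ℝ) → Matrix (Fin n) (Fin n) ℝ)
    (p q : Fin n → ℝ) : ℝ :=
  sInf {L | ∃ γ : ℝ → Fin n → ℝ, ContDiff ℝ 1 γ ∧ γ 0 = p ∧ γ 1 = q ∧ L = pathLen n h γ}

/-- Metric completeness of `(ℝⁿ, h)`: every Cauchy sequence for the Riemannian
distance converges. -/
def RiemComplete (n : ℕ) (h : (Fin n → ℝ) → Matrix (Fin n) (Fin n) ℝ) : Prop :=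
  ∀ f : ℕ → (Fin n → ℝ),
    (∀ ε > 0, ∃ N, ∀ p ≥ N, ∀ q ≥ N, riemDist n h (f p) (f q) < ε) →
    ∃ y, Tendsto (fun m => riemDist n h (f m) y) atTop (nhds 0)

/-- The `i`-th component of the covariant derivative `D_{γ'} γ'` along `γ` at `t`. -/
def covD (n : ℕ) (h hinv : (Fin n → ℝ) → Matrix (Fin n) (Fin n) ℝ)
    (γ : ℝ → Fin n → ℝ) (t : ℝ) (i : Fin n) : ℝ :=
  deriv (deriv γ) t i +
    ∑ j, ∑ k, christoffelSym n h hinv (γ t) i j k * deriv γ t j * deriv γ t k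

/-- Riemannian gradient (indices raised with `hinv`). -/
def gradH (n : ℕ) (hinv : (Fin n → ℝ) → Matrix (Fin n) (Fin n) ℝ)
    (f : (Fin n → ℝ) → ℝ) (x : Fin n → ℝ) (i : Fin n) : ℝ :=
  ∑ j, hinv x i j * pderiv' n f j x

/-- Smoothness, symmetry, positive definiteness of the metric field `h`,
and `hinv` being its pointwise inverse. -/
def IsRiemMetric (n : ℕ) (h hinv : (Fin n → ℝ) → Matrix (Fin n) (Fin n) ℝ) : Prop :=
  (∀ i j, ContDiff ℝ (⊤ : ℕ∞) (fun x => h x i j)) ∧ (∀ i j, ContDiff ℝ (⊤ : ℕ∞) (fun x => hinv x i j)) ∧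
  (∀ x i j, h x i j = h x j i) ∧
  (∀ x v, v ≠ 0 → 0 < hBil n h x v v) ∧
  (∀ x, h x * hinv x = 1)


/-- The mollifier `δ_ε(t) = ε⁻¹ φ(t/ε)`. -/
def mollδ (φ : ℝ → ℝ) (ε t : ℝ) : ℝ := ε⁻¹ * φ (t / ε)

/-- Its primitive `Θ_ε(t) = ∫_{−ε}^t δ_ε`. -/
def mollΘ (φ : ℝ → ℝ) (ε t : ℝ) : ℝ := ∫ s in (-ε)..t, mollδ φ ε s

/-- The double-spike profile `δ^ε_{α,β}(u) = α δ_ε(u) + β δ_ε(u−L)`. -/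
def dab (φ : ℝ → ℝ) (ε α β L t : ℝ) : ℝ := α * mollδ φ ε t + β * mollδ φ ε (t - L)

/-- The regularised box `ϑ^ε_L(u) = (Θ_ε(u) − Θ_ε(u−L))/L`. -/
def thb (φ : ℝ → ℝ) (ε L t : ℝ) : ℝ := (mollΘ φ ε t - mollΘ φ ε (t - L)) / L

/-- The profile `δ^ε_{1/L, −1/L}`. -/
def dLL (φ : ℝ → ℝ) (ε L t : ℝ) : ℝ := (mollδ φ ε t - mollδ φ ε (t - L)) / L

/-- The `x`-equation of the regularised impulsive full pp-wave \eqref{eq:regeoe}. -/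
def impXEq (n : ℕ) (h hinv : (Fin n → ℝ) → Matrix (Fin n) (Fin n) ℝ)
    (H : (Fin n → ℝ) → ℝ) (a : (Fin n → ℝ) → Fin n → ℝ)
    (φ : ℝ → ℝ) (ε α β L : ℝ) (x : ℝ → Fin n → ℝ) (t : ℝ) : Prop :=
  ∀ i, deriv (deriv x) t i =
    -(∑ j, ∑ k, christoffelSym n h hinv (x t) i j k * deriv x t j * deriv x t k)
    - thb φ ε L t * (∑ j, ∑ k, hinv (x t) i k *
        (pderiv' n (fun y => a y k) j (x t) - pderiv' n (fun y => a y j) k (x t))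
        * deriv x t j)
    - (1/2) * ∑ k, hinv (x t) i k *
        (2 * a (x t) k * dLL φ ε L t - pderiv' n H k (x t) * dab φ ε α β L t)

/-- The `r`-equation of the regularised impulsive full pp-wave \eqref{eq:rgeoe}. -/
def impREq (n : ℕ) (h hinv : (Fin n → ℝ) → Matrix (Fin n) (Fin n) ℝ)
    (H : (Fin n → ℝ) → ℝ) (a : (Fin n → ℝ) → Fin n → ℝ)
    (φ : ℝ → ℝ) (ε α β L : ℝ) (x : ℝ → Fin n → ℝ) (r : ℝ → ℝ) (t : ℝ) : Prop :=
  deriv (deriv r) t =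
    thb φ ε L t * (∑ i, ∑ j,
      ((1/2) * (pderiv' n (fun y => a y i) j (x t) + pderiv' n (fun y => a y j) i (x t))
        - ∑ k, christoffelSym n h hinv (x t) k i j * a (x t) k)
      * deriv x t i * deriv x t j)
    - (∑ j, ((∑ i, (∑ k, hinv (x t) i k * a (x t) k) * thb φ ε L t * thb φ ε L t *
          (pderiv' n (fun y => a y i) j (x t) - pderiv' n (fun y => a y j) i (x t)))
        - pderiv' n H j (x t) * dab φ ε α β L t) * deriv x t j)
    - ((∑ i, (∑ k, hinv (x t) i k * a (x t) k) * thb φ ε L t *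
          (a (x t) i * dLL φ ε L t - (1/2) * pderiv' n H i (x t) * dab φ ε α β L t))
        - (1/2) * H (x t) * deriv (fun s => dab φ ε α β L s) t)

open Filter

lemma aux_mv (f f' : ℝ → ℝ) (ε C : ℝ) (hε : 0 < ε)
    (hd : ∀ t ∈ Set.Icc (-ε) ε, HasDerivAt f (f' t) t)
    (hb : ∀ t ∈ Set.Icc (-ε) ε, |f' t| ≤ C) :
    ∀ t ∈ Set.Icc (-ε) ε, |f t - f (-ε)| ≤ 2 * ε * C := by
  intro t ht
  have hC : 0 ≤ C := (abs_nonneg _).trans (hb t ht)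
  have := norm_image_sub_le_of_norm_deriv_le_segment' (f := f) (f' := f') (C := C)
    (a := -ε) (b := ε) (fun s hs => (hd s hs).hasDerivWithinAt)
    (fun s hs => by simpa using hb s ⟨hs.1, hs.2.le⟩) t ht
  rw [Real.norm_eq_abs] at this
  refine this.trans ?_
  have : t ≤ ε := ht.2
  nlinarith

lemma aux_phi_zero {φ : ℝ → ℝ} (hφ : Continuous φ)
    (hs : Function.support φ ⊆ Set.Icc (-1) 1) {u : ℝ} (hu : u ≤ -1) : φ u = 0 := by
  have h1 : Set.EqOn φ (fun _ => 0) (closure (Set.Iio (-1))) := by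
    apply Set.EqOn.closure _ hφ continuous_const
    intro v hv
    by_contra hne
    exact absurd (hs hne).1 (not_le.2 hv)
  rw [closure_Iio] at h1
  exact h1 hu

lemma aux_phi_bdd {φ : ℝ → ℝ} (hφ : Continuous φ)
    (hs : Function.support φ ⊆ Set.Icc (-1) 1) : ∃ M : ℝ, 0 ≤ M ∧ ∀ u, |φ u| ≤ M := by
  obtain ⟨M, hM⟩ := (isCompact_Icc (a := (-1:ℝ)) (b := 1)).exists_bound_of_continuousOn
    hφ.continuousOn
  have hM0 : 0 ≤ M := (norm_nonneg _).trans (hM 0 (by norm_num))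
  refine ⟨M, hM0, fun u => ?_⟩
  by_cases hu : φ u = 0
  · simpa [hu] using hM0
  · exact hM u (hs hu)

lemma aux_delta_cont {φ : ℝ → ℝ} (hφ : Continuous φ) (ε : ℝ) : Continuous (mollδ φ ε) := by
  unfold mollδ; fun_prop

lemma aux_delta_zero {φ : ℝ → ℝ} (hφ : Continuous φ)
    (hs : Function.support φ ⊆ Set.Icc (-1) 1) {ε t : ℝ} (hε : 0 < ε) (ht : t ≤ -ε) :
    mollδ φ ε t = 0 := by
  have : t / ε ≤ -1 := by rw [div_le_iff₀ hε]; linarith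
  simp [mollδ, aux_phi_zero hφ hs this]

lemma aux_delta_bdd {φ : ℝ → ℝ} {M ε : ℝ} (hε : 0 < ε) (hM : ∀ u, |φ u| ≤ M) (t : ℝ) :
    |mollδ φ ε t| ≤ M / ε := by
  rw [mollδ, abs_mul, abs_of_pos (inv_pos.2 hε), div_eq_inv_mul M ε]
  exact mul_le_mul_of_nonneg_left (hM _) (inv_pos.2 hε).le

lemma aux_Theta_deriv {φ : ℝ → ℝ} (hφ : Continuous φ) (ε t : ℝ) :
    HasDerivAt (mollΘ φ ε) (mollδ φ ε t) t := by
  have hc := aux_delta_cont hφ ε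
  exact intervalIntegral.integral_hasDerivAt_right (hc.intervalIntegrable _ _)
    hc.stronglyMeasurable.stronglyMeasurableAtFilter hc.continuousAt

lemma aux_Theta_left {φ : ℝ → ℝ} (hφ : Continuous φ)
    (hs : Function.support φ ⊆ Set.Icc (-1) 1) {ε t : ℝ} (hε : 0 < ε) (ht : t ≤ -ε) :
    mollΘ φ ε t = 0 := by
  unfold mollΘ
  apply intervalIntegral.integral_zero_ae
  refine Eventually.of_forall fun s hs' => ?_
  rw [Set.uIoc_of_ge ht] at hs'
  exact aux_delta_zero hφ hs hε hs'.2

lemma aux_Theta_right {φ : ℝ → ℝ} (hφ : Continuous φ)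
    (hs : Function.support φ ⊆ Set.Icc (-1) 1) (hint : ∫ t, φ t = 1) {ε : ℝ} (hε : 0 < ε) :
    mollΘ φ ε ε = 1 := by
  unfold mollΘ mollδ
  rw [intervalIntegral.integral_const_mul, intervalIntegral.integral_comp_div _ hε.ne',
    smul_eq_mul, ← mul_assoc, inv_mul_cancel₀ hε.ne', one_mul, neg_div, div_self hε.ne']
  refine Eq.trans ?_ hint
  apply intervalIntegral.integral_eq_integral_of_support_subset
  intro u hu
  refine ⟨lt_of_not_ge fun h => hu (aux_phi_zero hφ hs h), (hs hu).2⟩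

lemma aux_Theta_bdd {φ : ℝ → ℝ} (hφ : Continuous φ)
    (hs : Function.support φ ⊆ Set.Icc (-1) 1) {M ε : ℝ} (hε : 0 < ε) (hM : ∀ u, |φ u| ≤ M) :
    ∀ t ∈ Set.Icc (-ε) ε, |mollΘ φ ε t| ≤ 2 * M := by
  intro t ht
  have := aux_mv (mollΘ φ ε) (mollδ φ ε) ε (M / ε) hε (fun t _ => aux_Theta_deriv hφ ε t)
    (fun t _ => aux_delta_bdd hε hM t) t ht
  rw [aux_Theta_left hφ hs hε le_rfl, sub_zero] at this
  refine this.trans (le_of_eq ?_)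
  field_simp

lemma aux_jump {φ : ℝ → ℝ} (hφ : Continuous φ)
    (hs : Function.support φ ⊆ Set.Icc (-1) 1) (hint : ∫ t, φ t = 1)
    (f p q : ℝ → ℝ → ℝ) (f₀ q₀ C ε₁ : ℝ) (hε₁ : 0 < ε₁)
    (hd : ∀ ε ∈ Set.Ioc (0:ℝ) ε₁, ∀ t ∈ Set.Icc (-ε) ε,
      HasDerivAt (f ε) (p ε t + q ε t * mollδ φ ε t) t)
    (hp : ∀ᶠ ε in nhdsWithin 0 (Set.Ioi 0), ∀ t ∈ Set.Icc (-ε) ε, |p ε t| ≤ C)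
    (hq : ∀ η > 0, ∀ᶠ ε in nhdsWithin (0:ℝ) (Set.Ioi 0), ∀ t ∈ Set.Icc (-ε) ε,
      |q ε t - q₀| ≤ η)
    (hf : Tendsto (fun ε => f ε (-ε)) (nhdsWithin 0 (Set.Ioi 0)) (nhds f₀)) :
    Tendsto (fun ε => f ε ε) (nhdsWithin 0 (Set.Ioi 0)) (nhds (f₀ + q₀)) := by
  obtain ⟨M, hM0, hM⟩ := aux_phi_bdd hφ hs
  have hdiff : Tendsto (fun ε => f ε ε - f ε (-ε) - q₀) (nhdsWithin 0 (Set.Ioi 0)) (nhds 0) := by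
    rw [Metric.tendsto_nhds]
    intro η hη
    have h1 : ∀ᶠ ε in nhdsWithin (0:ℝ) (Set.Ioi 0), 2 * ε * C < η / 2 := by
      have : Tendsto (fun ε : ℝ => 2 * ε * C) (nhds 0) (nhds (2 * 0 * C)) :=
        Continuous.tendsto (by fun_prop) 0
      exact (this.mono_left nhdsWithin_le_nhds).eventually (gt_mem_nhds (by simpa using hη))
    have h2 := hq (η / (4 * (M + 1))) (by positivity)
    filter_upwards [h1, h2, hp, Ioc_mem_nhdsGT hε₁] with ε e1 e2 e3 e4
    have hε := e4.1
    have key := aux_mv (fun t => f ε t - q₀ * mollΘ φ ε t)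
      (fun t => p ε t + q ε t * mollδ φ ε t - q₀ * mollδ φ ε t) ε
      (C + η / (4 * (M + 1)) * (M / ε)) hε
      (fun t ht => (hd ε e4 t ht).sub ((aux_Theta_deriv hφ ε t).const_mul q₀))
      (fun t ht => by
        have : p ε t + q ε t * mollδ φ ε t - q₀ * mollδ φ ε t
          = p ε t + (q ε t - q₀) * mollδ φ ε t := by ring
        rw [this]
        refine (abs_add_le _ _).trans (add_le_add (e3 t ht) ?_)
        rw [abs_mul]
        exact mul_le_mul (e2 t ht) (aux_delta_bdd hε hM t) (abs_nonneg _) (by positivity))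
      ε ⟨by linarith, le_rfl⟩
    simp only [aux_Theta_right hφ hs hint hε, aux_Theta_left hφ hs hε le_rfl] at key
    rw [dist_zero_right, Real.norm_eq_abs]
    have e5 : 2 * ε * (C + η / (4 * (M + 1)) * (M / ε)) < η := by
      have : 2 * ε * (C + η / (4 * (M + 1)) * (M / ε)) = 2 * ε * C + η / 2 * (M / (M + 1)) := by
        field_simp
        ring
      rw [this]
      have : M / (M + 1) ≤ 1 := by rw [div_le_one (by positivity)]; linarith
      nlinarith
    refine lt_of_le_of_lt ?_ e5
    have e6 : f ε ε - f ε (-ε) - q₀ = f ε ε - q₀ * 1 - (f ε (-ε) - q₀ * 0) := by ring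
    rw [e6]
    exact key
  have := (hdiff.add hf).add_const q₀
  convert this using 2 <;> ring

lemma aux_pderiv_cont (n : ℕ) (f : (Fin n → ℝ) → ℝ) (hf : ContDiff ℝ (⊤ : ℕ∞) f) (j : Fin n) :
    Continuous (pderiv' n f j) := by
  unfold pderiv'
  exact (hf.continuous_fderiv (by simp)).clm_apply continuous_const

lemma aux_christ_cont (n : ℕ) (h hinv : (Fin n → ℝ) → Matrix (Fin n) (Fin n) ℝ)
    (hmet : IsRiemMetric n h hinv) (i j k : Fin n) :
    Continuous (fun x => christoffelSym n h hinv x i j k) := by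
  unfold christoffelSym
  have h1 : ∀ a b c, Continuous (pderiv' n (fun y => h y a b) c) :=
    fun a b c => aux_pderiv_cont n _ (hmet.1 a b) c
  have h2 : ∀ a b, Continuous (fun x => hinv x a b) := fun a b => (hmet.2.1 a b).continuous
  fun_prop

lemma aux_bdd (n : ℕ) (G : (Fin n → ℝ) × (Fin n → ℝ) × ℝ → ℝ) (hG : Continuous G) (B T : ℝ) :
    ∃ C : ℝ, 0 ≤ C ∧ ∀ y v θ, ‖y‖ ≤ B → ‖v‖ ≤ B → |θ| ≤ T → |G (y, v, θ)| ≤ C := by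
  obtain ⟨C, hC⟩ := (((isCompact_closedBall (0 : Fin n → ℝ) B).prod
    ((isCompact_closedBall (0 : Fin n → ℝ) B).prod
      (isCompact_closedBall (0 : ℝ) T)))).exists_bound_of_continuousOn hG.continuousOn
  refine ⟨max C 0, le_max_right _ _, fun y v θ hy hv hθ => (hC (y, v, θ) ?_).trans (le_max_left _ _)⟩
  simp [hy, hv, hθ]

/-- **limit jump formulas at the first impulsive spike.**
As `ε ↘ 0`: (i) `x_ε(ε) → x₀`; (ii) `ẋ_ε(ε)ⁱ → ẋ₀ⁱ − ½h^{ik}(x₀)(2a_k(x₀)/L −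
αH_{,k}(x₀))`; (iii) `r_ε(ε) → r₀ + (α/2)H(x₀)`. -/
theorem impulsive_jump_formulas
    (n : ℕ) (h hinv : (Fin n → ℝ) → Matrix (Fin n) (Fin n) ℝ)
    (hmet : IsRiemMetric n h hinv)
    (H : (Fin n → ℝ) → ℝ) (hH : ContDiff ℝ (⊤ : ℕ∞) H)
    (a : (Fin n → ℝ) → Fin n → ℝ) (ha : ∀ i, ContDiff ℝ (⊤ : ℕ∞) (fun y => a y i))
    (α β L K : ℝ) (hL : 0 < L) (hK : 0 < K)
    (φ : ℝ → ℝ) (hφ : ContDiff ℝ (⊤ : ℕ∞) φ) (hφsupp : Function.support φ ⊆ Set.Icc (-1) 1)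
    (hφint : ∫ t, φ t = 1) (hφK : ∫ t, |φ t| ≤ K)
    (ε₁ : ℝ) (hε₁ : 0 < ε₁) (hε₁1 : ε₁ ≤ 1) (hε₁L : ε₁ < L / 2)
    (x : ℝ → ℝ → Fin n → ℝ) (r : ℝ → ℝ → ℝ)
    (x₀ dx₀ : Fin n → ℝ) (r₀ dr₀ : ℝ)
    (hsmooth : ∀ ε ∈ Set.Ioc (0:ℝ) ε₁, ContDiff ℝ 2 (x ε) ∧ ContDiff ℝ 2 (r ε))
    -- the geodesic equations hold on the strip `[−ε, ε]`
    (hodex : ∀ ε ∈ Set.Ioc (0:ℝ) ε₁, ∀ t ∈ Set.Icc (-ε) ε,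
      impXEq n h hinv H a φ ε α β L (x ε) t)
    (hoder : ∀ ε ∈ Set.Ioc (0:ℝ) ε₁, ∀ t ∈ Set.Icc (-ε) ε,
      impREq n h hinv H a φ ε α β L (x ε) (r ε) t)
    -- the data at the left end of the strip converges
    (hd1 : Tendsto (fun ε => x ε (-ε)) (nhdsWithin 0 (Set.Ioi 0)) (nhds x₀))
    (hd2 : Tendsto (fun ε => deriv (x ε) (-ε)) (nhdsWithin 0 (Set.Ioi 0)) (nhds dx₀))
    (hd3 : Tendsto (fun ε => r ε (-ε)) (nhdsWithin 0 (Set.Ioi 0)) (nhds r₀))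
    (hd4 : Tendsto (fun ε => deriv (r ε) (-ε)) (nhdsWithin 0 (Set.Ioi 0)) (nhds dr₀))
    -- `(x_ε, ẋ_ε)` is uniformly bounded on the strip
    (hbd : ∃ B : ℝ, ∀ ε ∈ Set.Ioc (0:ℝ) ε₁, ∀ t ∈ Set.Icc (-ε) ε,
      ‖x ε t‖ ≤ B ∧ ‖deriv (x ε) t‖ ≤ B) :
    -- (i)
    Tendsto (fun ε => x ε ε) (nhdsWithin 0 (Set.Ioi 0)) (nhds x₀) ∧
    -- (ii)
    Tendsto (fun ε => deriv (x ε) ε) (nhdsWithin 0 (Set.Ioi 0))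
      (nhds (fun i => dx₀ i
        - (1/2) * ∑ k, hinv x₀ i k * (2 * a x₀ k / L - α * pderiv' n H k x₀))) ∧
    -- (iii)
    Tendsto (fun ε => r ε ε) (nhdsWithin 0 (Set.Ioi 0))
      (nhds (r₀ + (α / 2) * H x₀)) := by
  obtain ⟨B, hB⟩ := hbd
  have hφc := hφ.continuous
  obtain ⟨M, hM0, hM⟩ := aux_phi_bdd hφc hφsupp
  have hpos : (Set.Ioc (0:ℝ) ε₁) ∈ nhdsWithin (0:ℝ) (Set.Ioi 0) := Ioc_mem_nhdsGT hε₁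
  have hB0 : 0 ≤ B := (norm_nonneg _).trans
    (hB ε₁ ⟨hε₁, le_rfl⟩ 0 ⟨by linarith, hε₁.le⟩).1
  -- continuity facts
  have cP : ∀ a b c, Continuous (pderiv' n (fun y => h y a b) c) :=
    fun a b c => aux_pderiv_cont n _ (hmet.1 a b) c
  have cI : ∀ a b, Continuous (fun x => hinv x a b) := fun a b => (hmet.2.1 a b).continuous
  have cG := aux_christ_cont n h hinv hmet
  have cA : ∀ i, Continuous (fun x => a x i) := fun i => (ha i).continuous
  have cDA : ∀ i j, Continuous (pderiv' n (fun y => a y i) j) :=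
    fun i j => aux_pderiv_cont n _ (ha i) j
  have cH := hH.continuous
  have cDH : ∀ j, Continuous (pderiv' n H j) := fun j => aux_pderiv_cont n _ hH j
  have cfH : Continuous (fderiv ℝ H) := hH.continuous_fderiv (by simp)
  -- derivative facts
  have dx : ∀ ε ∈ Set.Ioc (0:ℝ) ε₁, ∀ t, HasDerivAt (x ε) (deriv (x ε) t) t := fun ε hε t =>
    ((hsmooth ε hε).1.differentiable (by norm_num) t).hasDerivAt
  have ddx : ∀ ε ∈ Set.Ioc (0:ℝ) ε₁, ∀ t, HasDerivAt (deriv (x ε)) (deriv (deriv (x ε)) t) t :=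
    fun ε hε t => (((contDiff_succ_iff_deriv (n := 1)).1
      (by simpa [one_add_one_eq_two] using (hsmooth ε hε).1)).2.2.differentiable
        (by norm_num) t).hasDerivAt
  have dr : ∀ ε ∈ Set.Ioc (0:ℝ) ε₁, ∀ t, HasDerivAt (r ε) (deriv (r ε) t) t := fun ε hε t =>
    ((hsmooth ε hε).2.differentiable (by norm_num) t).hasDerivAt
  have ddr : ∀ ε ∈ Set.Ioc (0:ℝ) ε₁, ∀ t, HasDerivAt (deriv (r ε)) (deriv (deriv (r ε)) t) t :=
    fun ε hε t => (((contDiff_succ_iff_deriv (n := 1)).1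
      (by simpa [one_add_one_eq_two] using (hsmooth ε hε).2)).2.2.differentiable
        (by norm_num) t).hasDerivAt
  -- profile facts on the strip
  have ethb : ∀ ε ∈ Set.Ioc (0:ℝ) ε₁, ∀ t ∈ Set.Icc (-ε) ε,
      thb φ ε L t = mollΘ φ ε t / L := by
    intro ε hε t ht
    rw [thb, aux_Theta_left hφc hφsupp hε.1 (by linarith [ht.2, hε.2] : t - L ≤ -ε), sub_zero]
  have edLL : ∀ ε ∈ Set.Ioc (0:ℝ) ε₁, ∀ t ∈ Set.Icc (-ε) ε,
      dLL φ ε L t = mollδ φ ε t / L := by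
    intro ε hε t ht
    rw [dLL, aux_delta_zero hφc hφsupp hε.1 (by linarith [ht.2, hε.2] : t - L ≤ -ε), sub_zero]
  have edab : ∀ ε ∈ Set.Ioc (0:ℝ) ε₁, ∀ t ∈ Set.Iic ε,
      dab φ ε α β L t = α * mollδ φ ε t := by
    intro ε hε t ht
    have ht' : t ≤ ε := ht
    rw [dab, aux_delta_zero hφc hφsupp hε.1 (by linarith [hε.2] : t - L ≤ -ε), mul_zero, add_zero]
  have ddel : ∀ ε t, HasDerivAt (mollδ φ ε) (deriv (mollδ φ ε) t) t := by
    intro ε t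
    have : Differentiable ℝ (mollδ φ ε) := by
      have := hφ.differentiable (by simp)
      unfold mollδ
      fun_prop
    exact (this t).hasDerivAt
  have eddab : ∀ ε ∈ Set.Ioc (0:ℝ) ε₁, ∀ t ∈ Set.Icc (-ε) ε,
      deriv (fun s => dab φ ε α β L s) t = α * deriv (mollδ φ ε) t := by
    intro ε hε t ht
    rw [← deriv_const_mul_field]
    apply Filter.EventuallyEq.deriv_eq
    have : t < L - ε := by linarith [ht.2, hε.2]
    filter_upwards [Iio_mem_nhds this] with s hs
    have hs' : s < L - ε := hs
    rw [dab, aux_delta_zero hφc hφsupp hε.1 (by linarith : s - L ≤ -ε), mul_zero, add_zero]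
  -- uniform convergence of `x`
  have hxd : ∀ ε ∈ Set.Ioc (0:ℝ) ε₁, ∀ t ∈ Set.Icc (-ε) ε,
      ‖x ε t - x ε (-ε)‖ ≤ 2 * ε * B := by
    intro ε hε t ht
    have h0 := hε.1
    rw [pi_norm_le_iff_of_nonneg (by positivity)]
    intro i
    exact aux_mv (fun t => x ε t i) (fun t => deriv (x ε) t i) ε B hε.1
      (fun t _ => hasDerivAt_pi.1 (dx ε hε t) i)
      (fun t ht => (norm_le_pi_norm (deriv (x ε) t) i).trans (hB ε hε t ht).2) t ht
  have hunif : ∀ G : (Fin n → ℝ) → ℝ, Continuous G → ∀ η > 0,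
      ∀ᶠ ε in nhdsWithin (0:ℝ) (Set.Ioi 0), ∀ t ∈ Set.Icc (-ε) ε,
        |G (x ε t) - G x₀| ≤ η := by
    intro G hG η hη
    obtain ⟨ρ, hρ, hGρ⟩ := Metric.continuousAt_iff.1 (hG.continuousAt (x := x₀)) η hη
    have h1 : ∀ᶠ ε in nhdsWithin (0:ℝ) (Set.Ioi 0), 2 * ε * B < ρ / 2 := by
      have : Tendsto (fun ε : ℝ => 2 * ε * B) (nhds 0) (nhds (2 * 0 * B)) :=
        Continuous.tendsto (by fun_prop) 0
      exact (this.mono_left nhdsWithin_le_nhds).eventually (gt_mem_nhds (by simpa using hρ))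
    have h2 := Metric.tendsto_nhds.1 hd1 (ρ / 2) (by positivity)
    filter_upwards [h1, h2, hpos] with ε e1 e2 e3 t ht
    refine (hGρ ?_).le
    have := hxd ε e3 t ht
    calc dist (x ε t) x₀ ≤ dist (x ε t) (x ε (-ε)) + dist (x ε (-ε)) x₀ := dist_triangle _ _ _
      _ < ρ := by rw [dist_eq_norm (x ε t)]; linarith
  refine ⟨?_, ?_, ?_⟩
  · have h1 : Tendsto (fun ε => x ε ε - x ε (-ε)) (nhdsWithin 0 (Set.Ioi 0)) (nhds 0) := by
      have : Tendsto (fun ε : ℝ => 2 * ε * B) (nhds 0) (nhds 0) := by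
        have := Continuous.tendsto (f := fun ε : ℝ => 2 * ε * B) (by fun_prop) 0
        simpa using this
      refine squeeze_zero_norm' ?_ (this.mono_left nhdsWithin_le_nhds)
      filter_upwards [hpos] with ε hε
      exact hxd ε hε ε ⟨by linarith [hε.1], le_rfl⟩
    simpa using h1.add hd1
  · rw [tendsto_pi_nhds]
    intro i
    rw [sub_eq_add_neg]
    let P : (Fin n → ℝ) × (Fin n → ℝ) × ℝ → ℝ := fun z =>
      -(∑ j, ∑ k, christoffelSym n h hinv z.1 i j k * z.2.1 j * z.2.1 k)
      - z.2.2 / L * (∑ j, ∑ k, hinv z.1 i k *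
        (pderiv' n (fun y => a y k) j z.1 - pderiv' n (fun y => a y j) k z.1)
        * z.2.1 j)
    have hPc : Continuous P := by fun_prop
    obtain ⟨C, -, hC⟩ := aux_bdd n P hPc B (2 * M)
    let F : (Fin n → ℝ) → ℝ := fun y =>
      -((1/2) * ∑ k, hinv y i k * (2 * a y k / L - α * pderiv' n H k y))
    have hFc : Continuous F := by fun_prop
    refine aux_jump hφc hφsupp hφint (fun ε t => deriv (x ε) t i)
      (fun ε t => P (x ε t, deriv (x ε) t, mollΘ φ ε t)) (fun ε t => F (x ε t))
      (dx₀ i) (F x₀) C ε₁ hε₁ ?_ ?_ (hunif F hFc) (tendsto_pi_nhds.1 hd2 i)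
    · intro ε hε t ht
      have h1 := hasDerivAt_pi.1 (ddx ε hε t) i
      rw [hodex ε hε t ht i, ethb ε hε t ht, edLL ε hε t ht, edab ε hε t ht.2] at h1
      refine h1.congr_deriv (Eq.symm ?_)
      simp only [P, F]
      have s1 : ∀ A b D : Fin n → ℝ, ∀ d : ℝ,
          (∑ k, A k * (2 * b k * (d / L) - D k * (α * d)))
          = (∑ k, A k * (2 * b k / L - α * D k)) * d := by
        intro A b D d
        rw [Finset.sum_mul]
        exact Finset.sum_congr rfl fun j _ => by ring
      rw [s1 (fun k => hinv (x ε t) i k)]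
      ring
    · filter_upwards [hpos] with ε hε t ht
      exact hC _ _ _ (hB ε hε t ht).1 (hB ε hε t ht).2 (aux_Theta_bdd hφc hφsupp hε.1 hM t ht)
  · let Q : (Fin n → ℝ) × (Fin n → ℝ) × ℝ → ℝ := fun z =>
      z.2.2 / L * (∑ i, ∑ j,
      ((1/2) * (pderiv' n (fun y => a y i) j z.1 + pderiv' n (fun y => a y j) i z.1)
        - ∑ k, christoffelSym n h hinv z.1 k i j * a z.1 k)
      * z.2.1 i * z.2.1 j)
      - (∑ j, (∑ i, (∑ k, hinv z.1 i k * a z.1 k) * (z.2.2 / L) * (z.2.2 / L) *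
          (pderiv' n (fun y => a y i) j z.1 - pderiv' n (fun y => a y j) i z.1)) * z.2.1 j)
    have hQc : Continuous Q := by fun_prop
    let R : (Fin n → ℝ) × (Fin n → ℝ) × ℝ → ℝ := fun z =>
      (∑ j, pderiv' n H j z.1 * α * z.2.1 j)
      - (∑ i, (∑ k, hinv z.1 i k * a z.1 k) * (z.2.2 / L) *
          (a z.1 i / L - (1/2) * pderiv' n H i z.1 * α))
      - α / 2 * fderiv ℝ H z.1 z.2.1
    have hRc : Continuous R := by fun_prop
    obtain ⟨C₁, hC₁0, hC₁⟩ := aux_bdd n Q hQc B (2 * M)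
    obtain ⟨C₂, hC₂0, hC₂⟩ := aux_bdd n R hRc B (2 * M)
    let g : ℝ → ℝ → ℝ := fun ε t => deriv (r ε) t - α / 2 * H (x ε t) * mollδ φ ε t
    have hg : ∀ ε ∈ Set.Ioc (0:ℝ) ε₁, ∀ t ∈ Set.Icc (-ε) ε, HasDerivAt (g ε)
        (Q (x ε t, deriv (x ε) t, mollΘ φ ε t)
          + R (x ε t, deriv (x ε) t, mollΘ φ ε t) * mollδ φ ε t) t := by
      intro ε hε t ht
      have hHx : HasDerivAt (fun t => H (x ε t)) (fderiv ℝ H (x ε t) (deriv (x ε) t)) t :=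
        ((hH.differentiable (by simp) (x ε t)).hasFDerivAt).comp_hasDerivAt t (dx ε hε t)
      have h1 := (ddr ε hε t).sub ((hHx.const_mul (α / 2)).mul (ddel ε t))
      refine h1.congr_deriv ?_
      rw [hoder ε hε t ht, ethb ε hε t ht, edLL ε hε t ht, edab ε hε t ht.2, eddab ε hε t ht]
      simp only [Q, R]
      have s1 : ∀ A D v : Fin n → ℝ, ∀ d : ℝ, (∑ j, (A j - D j * (α * d)) * v j)
          = (∑ j, A j * v j) - (∑ j, D j * α * v j) * d := by
        intro A D v d
        rw [Finset.sum_mul, ← Finset.sum_sub_distrib]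
        exact Finset.sum_congr rfl fun j _ => by ring
      have s2 : ∀ A b D : Fin n → ℝ, ∀ d c : ℝ,
          (∑ i, A i * c * (b i * (d / L) - (1/2) * D i * (α * d)))
          = (∑ i, A i * c * (b i / L - (1/2) * D i * α)) * d := by
        intro A b D d c
        rw [Finset.sum_mul]
        exact Finset.sum_congr rfl fun j _ => by ring
      rw [s1, s2 (fun i => ∑ k, hinv (x ε t) i k * a (x ε t) k)]
      ring
    have hgb : ∀ᶠ ε in nhdsWithin (0:ℝ) (Set.Ioi 0), ∀ t ∈ Set.Icc (-ε) ε,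
        |g ε t| ≤ (|dr₀| + 1) + (2 * C₁ + 2 * C₂ * M) := by
      have h2 := Metric.tendsto_nhds.1 hd4 1 one_pos
      filter_upwards [h2, hpos] with ε e2 hε t ht
      have h0 := hε.1
      have key := aux_mv (g ε) _ ε (C₁ + C₂ * (M / ε)) hε.1 (hg ε hε)
        (fun t ht => by
          have hT := aux_Theta_bdd hφc hφsupp hε.1 hM t ht
          have hb := hB ε hε t ht
          refine (abs_add_le _ _).trans (add_le_add (hC₁ _ _ _ hb.1 hb.2 hT) ?_)
          rw [abs_mul]
          exact mul_le_mul (hC₂ _ _ _ hb.1 hb.2 hT) (aux_delta_bdd hε.1 hM t)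
            (abs_nonneg _) hC₂0) t ht
      have e5 : 2 * ε * (C₁ + C₂ * (M / ε)) = 2 * ε * C₁ + 2 * C₂ * M := by
        field_simp
      have e6 : g ε (-ε) = deriv (r ε) (-ε) := by
        simp [g, aux_delta_zero hφc hφsupp hε.1 le_rfl]
      rw [e5, e6] at key
      rw [Real.dist_eq] at e2
      have t1 := abs_sub_abs_le_abs_sub (g ε t) (deriv (r ε) (-ε))
      have t2 := abs_sub_abs_le_abs_sub (deriv (r ε) (-ε)) dr₀
      have : ε * C₁ ≤ C₁ := by nlinarith [hε.2]
      linarith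
    refine aux_jump hφc hφsupp hφint r g (fun ε t => α / 2 * H (x ε t))
      r₀ (α / 2 * H x₀) _ ε₁ hε₁ ?_ hgb
      (hunif (fun y => α / 2 * H y) (by fun_prop)) hd3
    intro ε hε t ht
    refine (dr ε hε t).congr_deriv ?_
    change deriv (r ε) t = (deriv (r ε) t - α / 2 * H (x ε t) * mollδ φ ε t)
      + α / 2 * H (x ε t) * mollδ φ ε t
    ring
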